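/- δ(2,50) ≤ 1/210. -/

import Mathlib

open Filter Real

/-- A `k`-tuple of integers is admissible if for every prime `p` its entries
do not cover all residue classes mod `p`. -/
def AdmissibleTuple {k : ℕ} (x : Fin k → ℤ) : Prop :=
  ∀ p : ℕ, p.Prime → ∃ r : ZMod p, ∀ i, (x i : ZMod p) ≠ r

/-- An `(m,k)`-plausible set: translation invariant, permutation invariant, and
every admissible `k`-tuple of distinct integers contains an `m`-subtuple lying in `A`. -/
def Plausible (m k : ℕ) (A : Set (Fin m → ℤ)) : Prop :=
  (∀ h ∈ A, ∀ t : ℤ, (fun i => h i + t) ∈ A) ∧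
  (∀ h ∈ A, ∀ σ : Equiv.Perm (Fin m), (h ∘ σ) ∈ A) ∧
  (∀ x : Fin k → ℤ, Function.Injective x → AdmissibleTuple x →
    ∃ f : Fin m → Fin k, Function.Injective f ∧ (x ∘ f) ∈ A)

/-- The number of points of `A` in the box `[-N, N]^m`. -/
noncomputable def boxCount (m : ℕ) (A : Set (Fin m → ℤ)) (N : ℕ) : ℕ :=
  Nat.card {h : Fin m → ℤ // h ∈ A ∧ ∀ i, |h i| ≤ (N : ℤ)}

/-- The liminf density of `A ⊆ ℤ^m` in boxes `[-N, N]^m`. -/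
noncomputable def lowerBoxDensity (m : ℕ) (A : Set (Fin m → ℤ)) : ℝ :=
  Filter.liminf (fun N : ℕ => (boxCount m A N : ℝ) / (2 * N) ^ m) Filter.atTop

/-- `δ(m,k)`: the infimum over `(m,k)`-plausible sets `A` of the liminf density of `A`. -/
noncomputable def delta (m k : ℕ) : ℝ :=
  sInf { d : ℝ | ∃ A : Set (Fin m → ℤ), Plausible m k A ∧ d = lowerBoxDensity m A }

/-!
Reducing an admissible tuple modulo every prime factor of `W` misses a class each time, so by the
Chinese remainder theorem a single translate of the tuple consists of integers coprime to `W`. It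
therefore occupies at most `φ(W)` classes modulo `W`, and a tuple of length greater than `m φ(W)`
has `m + 1` entries in one class. Hence the tuples whose entries are all congruent modulo `W` form
an `(m + 1, k)`-plausible set as soon as `m φ(W) < k`, and this set has density `1 / W ^ m`.
Here `W = 210 = 2 · 3 · 5 · 7`, with `φ(210) = 48`.
-/

/-- The `m`-tuples of integers whose entries lie in a single residue class modulo `W`; they serve
as the plausible set bounding `delta` from above. -/
def congruentTuples (m W : ℕ) : Set (Fin m → ℤ) :=
  {h | ∀ i j, h i ≡ h j [ZMOD W]}

namespace AdmissibleTuple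

variable {k W : ℕ} {x : Fin k → ℤ}

lemma exists_forall_isCoprime_sub (hx : AdmissibleTuple x) (hW : W ≠ 0) :
    ∃ a : ℤ, ∀ i, IsCoprime (W : ℤ) (x i - a) := by
  choose! r hr using hx
  obtain ⟨a, ha⟩ := Nat.chineseRemainderOfFinset (fun p => (r p).val) id W.primeFactors
    (fun p hp => (Nat.prime_of_mem_primeFactors hp).ne_zero)
    (fun p hp q hq hpq => (Nat.coprime_primes (Nat.prime_of_mem_primeFactors hp)
      (Nat.prime_of_mem_primeFactors hq)).2 hpq)
  refine ⟨a, fun i => Int.isCoprime_iff_gcd_eq_one.2 (Nat.coprime_of_dvd fun p hp hpW hpx => ?_)⟩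
  have : NeZero p := ⟨hp.ne_zero⟩
  have ha_eq : (a : ZMod p) = r p := by
    simpa using (ZMod.natCast_eq_natCast_iff _ _ _).2
      (ha p (hp.mem_primeFactors hpW hW))
  have hx_eq : (x i : ZMod p) = a := by
    have h_dvd : (p : ℤ) ∣ x i - a := Int.natCast_dvd.2 hpx
    simpa [sub_eq_zero] using (ZMod.intCast_zmod_eq_zero_iff_dvd _ p).2 h_dvd
  exact hr p hp i (hx_eq.trans ha_eq)

lemma exists_comp_mem_congruentTuples (hx : AdmissibleTuple x) (hW : W ≠ 0) {m : ℕ}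
    (hk : m * W.totient < k) :
    ∃ f : Fin (m + 1) → Fin k, Function.Injective f ∧ x ∘ f ∈ congruentTuples (m + 1) W := by
  have : NeZero W := ⟨hW⟩
  obtain ⟨a, ha⟩ := hx.exists_forall_isCoprime_sub hW
  choose u hu using fun i => (ZMod.coe_int_isUnit_iff_isCoprime (x i - a) W).2 (ha i)
  obtain ⟨c, hc⟩ : ∃ c, m < (Finset.univ.filter fun i => u i = c).card :=
    Fintype.exists_lt_card_fiber_of_mul_lt_card u (by
      simpa [ZMod.card_units_eq_totient, mul_comm] using hk)
  let f := Finset.orderEmbOfCardLe _ (Nat.succ_le_of_lt hc)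
  have hf (i : Fin (m + 1)) : u (f i) = c :=
    (Finset.mem_filter.1 (Finset.orderEmbOfCardLe_mem _ (Nat.succ_le_of_lt hc) i)).2
  refine ⟨f, f.injective, fun i j => (ZMod.intCast_eq_intCast_iff _ _ W).1 ?_⟩
  have h_shift : ((x (f i) - a : ℤ) : ZMod W) = ((x (f j) - a : ℤ) : ZMod W) := by
    rw [← hu, ← hu, hf, hf]
  simpa using h_shift

end AdmissibleTuple

lemma plausible_congruentTuples {m k W : ℕ} (hW : W ≠ 0) (hk : m * W.totient < k) :
    Plausible (m + 1) k (congruentTuples (m + 1) W) :=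
  ⟨fun _ hh t i j => (hh i j).add_right t, fun _ hh σ i j => hh (σ i) (σ j),
    fun _ _ hx => hx.exists_comp_mem_congruentTuples hW hk⟩

lemma boxCount_congruentTuples_le {W : ℕ} (hW : W ≠ 0) (m N : ℕ) :
    boxCount (m + 1) (congruentTuples (m + 1) W) N ≤ (2 * N + 1) * (2 * N / W + 1) ^ m := by
  -- The first entry fixes the residue class, so each other entry is determined by its quotient
  -- by `W`; shifting by `N` makes the quotients nonnegative.
  let code (h : Fin (m + 1) → ℤ) : ℤ × (Fin m → ℤ) := (h 0, fun i => (h i.succ + N) / W)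
  let S : Finset (ℤ × (Fin m → ℤ)) :=
    Finset.Icc (-N : ℤ) N ×ˢ Fintype.piFinset fun _ => Finset.Icc 0 ((2 * N / W : ℕ) : ℤ)
  have hW_pos : (0 : ℤ) < W := by positivity
  have hS : S.card = (2 * N + 1) * (2 * N / W + 1) ^ m := by
    simp only [S, Finset.card_product, Fintype.card_piFinset_const, Int.card_Icc]
    congr 2
    omega
  rw [← hS, ← Set.ncard_coe_finset]
  refine Set.ncard_le_ncard_of_injOn code ?_ ?_ S.finite_toSet
  · rintro h ⟨-, h_box⟩
    have h_box (i) : -(N : ℤ) ≤ h i ∧ h i ≤ N := abs_le.1 (h_box i)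
    simp only [S, code, Finset.mem_coe, Finset.mem_product, Fintype.mem_piFinset, Finset.mem_Icc]
    refine ⟨h_box 0, fun i => ⟨Int.ediv_nonneg (by linarith [h_box i.succ]) hW_pos.le, ?_⟩⟩
    push_cast
    exact Int.ediv_le_ediv hW_pos (by linarith [h_box i.succ])
  · rintro g ⟨hg, -⟩ h ⟨hh, -⟩ h_code
    obtain ⟨h_zero, h_quot⟩ := Prod.mk.inj h_code
    refine funext (Fin.cases h_zero fun i => ?_)
    have h_rem : (g i.succ + N) % W = (h i.succ + N) % W :=
      ((hg i.succ 0).trans (h_zero ▸ hh 0 i.succ)).add_right N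
    have h_eq : g i.succ + N = h i.succ + N := by
      rw [← Int.mul_ediv_add_emod (g i.succ + N) W, h_rem, congrFun h_quot i,
        Int.mul_ediv_add_emod]
    exact add_right_cancel h_eq

section Density

variable {m : ℕ} {A : Set (Fin m → ℤ)}

lemma lowerBoxDensity_nonneg : 0 ≤ lowerBoxDensity m A := by
  rw [lowerBoxDensity, liminf_eq]
  exact Real.sSup_nonneg' ⟨0, Eventually.of_forall fun N => by positivity, le_rfl⟩

lemma lowerBoxDensity_le_of_tendsto {u : ℕ → ℝ} {c : ℝ} (hu : Tendsto u atTop (nhds c))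
    (hA : ∀ᶠ N : ℕ in atTop, boxCount m A N / (2 * N : ℝ) ^ m ≤ u N) :
    lowerBoxDensity m A ≤ c := by
  have h_bdd : atTop.IsBoundedUnder (· ≥ ·) fun N : ℕ => boxCount m A N / (2 * N : ℝ) ^ m :=
    isBoundedUnder_of ⟨0, fun N => by positivity⟩
  exact hu.liminf_eq ▸ liminf_le_liminf hA h_bdd hu.isCoboundedUnder_ge

lemma delta_le_lowerBoxDensity {k : ℕ} (hA : Plausible m k A) :
    delta m k ≤ lowerBoxDensity m A :=
  csInf_le ⟨0, by rintro _ ⟨B, -, rfl⟩; exact lowerBoxDensity_nonneg⟩ ⟨A, hA, rfl⟩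

end Density

lemma lowerBoxDensity_congruentTuples_le {W : ℕ} (hW : W ≠ 0) (m : ℕ) :
    lowerBoxDensity (m + 1) (congruentTuples (m + 1) W) ≤ 1 / (W : ℝ) ^ m := by
  have h_inv : Tendsto (fun N : ℕ => 1 / (2 * N : ℝ)) atTop (nhds 0) := by
    simpa [mul_comm] using (tendsto_inv_atTop_nhds_zero_nat (𝕜 := ℝ)).mul_const 2⁻¹
  have h_lim : Tendsto (fun N : ℕ => (1 + 1 / (2 * N : ℝ)) * (1 / W + 1 / (2 * N : ℝ)) ^ m) atTop
      (nhds (1 / (W : ℝ) ^ m)) := by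
    simpa using (h_inv.const_add 1).mul ((h_inv.const_add (1 / (W : ℝ))).pow m)
  refine lowerBoxDensity_le_of_tendsto h_lim ?_
  filter_upwards [eventually_gt_atTop 0] with N hN
  have h_quot : ((2 * N / W : ℕ) : ℝ) ≤ 2 * N / W := by
    exact_mod_cast Nat.cast_div_le (α := ℝ) (m := 2 * N) (n := W)
  rw [div_le_iff₀ (by positivity)]
  calc (boxCount (m + 1) (congruentTuples (m + 1) W) N : ℝ)
      ≤ (2 * N + 1) * ((2 * N / W : ℕ) + 1) ^ m := by
        exact_mod_cast boxCount_congruentTuples_le hW m N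
    _ ≤ (2 * N + 1) * (2 * N / W + 1) ^ m := by gcongr
    _ = ((1 + 1 / (2 * N)) * (2 * N)) * ((1 / W + 1 / (2 * N)) * (2 * N)) ^ m := by
        congr 2 <;> field_simp
    _ = (1 + 1 / (2 * N)) * (1 / W + 1 / (2 * N)) ^ m * (2 * N) ^ (m + 1) := by
        rw [mul_pow, mul_mul_mul_comm, ← pow_succ']

theorem stmt_8_general {m k W : ℕ} (hW : W ≠ 0) (hk : m * W.totient < k) :
    delta (m + 1) k ≤ 1 / (W : ℝ) ^ m :=
  (delta_le_lowerBoxDensity (plausible_congruentTuples hW hk)).trans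
    (lowerBoxDensity_congruentTuples_le hW m)

theorem stmt_8 : delta 2 50 ≤ 1 / 210 := by
  simpa using stmt_8_general (m := 1) (k := 50) (W := 210) (by decide) (by decide)
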